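/- Additive representation of a Markov multiplicative process (converse direction of Theorem 2.4): let (Z, J) be a Markov multiplicative process with respect to (F_t) whose paths are càdlàg and satisfy Z_t ≠ 0 for all t ≥ 0 and Z_{t−} ≠ 0 for all t > 0. Define Ȳ_t := −log|Z_t| and K̄_t := #{s ∈ (0, t] : Z_s/Z_{s−} < 0} (a finite number for each t by the path assumptions). Then ((Ȳ, K̄), J) is a bivariate Markov additive process with respect to (F_t), and Z_t = (−1)^{K̄_t} e^{−Ȳ_t} almost surely for every t ≥ 0; in particular Z_0 = 1 P_j-almost surely for every j ∈ S. -/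

import Mathlib

open MeasureTheory ProbabilityTheory
open scoped NNReal Topology

/-- The number of sign changes of the multiplicative increments of `Z` along the path `ω`
up to time `t`. -/
noncomputable def signChangeCount {Ω : Type*} (Z Zm : ℝ≥0 → Ω → ℝ) (t : ℝ≥0) (ω : Ω) : ℕ :=
  Set.ncard {s : ℝ≥0 | s ∈ Set.Ioc 0 t ∧ Z s ω / Zm s ω < 0}

lemma mul_leftLim_pos {z zm : ℝ≥0 → ℝ} {v w : ℝ≥0} {c : ℝ} (hwv : w < v)
    (hz : Filter.Tendsto z (𝓝[<] v) (𝓝 (zm v))) (hzm : zm v ≠ 0)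
    (h : ∀ x ∈ Set.Ioo w v, 0 < c * z x) : 0 < c * zm v := by
  have : (𝓝[<] v).NeBot := nhdsLT_neBot_of_exists_lt ⟨w, hwv⟩
  have hc : c ≠ 0 := by
    obtain ⟨x, hx⟩ := exists_between hwv
    exact left_ne_zero_of_mul (h x hx).ne'
  refine lt_of_le_of_ne ?_ (mul_ne_zero hc hzm).symm
  refine ge_of_tendsto (hz.const_mul c) ?_
  filter_upwards [Ioo_mem_nhdsLT hwv] with x hx using (h x hx).le

lemma div_pos_of_common_sign {a b c : ℝ} (ha : 0 < c * a) (hb : 0 < c * b) : 0 < b / a := by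
  have hc : c ≠ 0 := left_ne_zero_of_mul ha.ne'
  rw [← mul_div_mul_left b a hc]
  exact div_pos hb ha

/-- Near every time there is at most one sign change of the path, and it is detected by
comparing the values at two times. -/
lemma exists_ball_ncard_signChange {z zm : ℝ≥0 → ℝ}
    (hr : ∀ t, ContinuousWithinAt z (Set.Ici t) t)
    (hl : ∀ t, 0 < t → Filter.Tendsto z (𝓝[<] t) (𝓝 (zm t)))
    (hz : ∀ t, z t ≠ 0) (hzm : ∀ t, 0 < t → zm t ≠ 0) (u : ℝ≥0) :
    ∃ ε > 0, ∀ a ∈ Metric.ball u ε, ∀ b ∈ Metric.ball u ε, a ≤ b →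
      {s | s ∈ Set.Ioc a b ∧ z s / zm s < 0}.Finite ∧
      {s | s ∈ Set.Ioc a b ∧ z s / zm s < 0}.ncard = if z b / z a < 0 then 1 else 0 := by
  have hR : ∀ᶠ v in 𝓝 u, u ≤ v → 0 < z u * z v := by
    have := (hr u).const_mul (z u)
    have := Filter.Tendsto.eventually_const_lt (mul_self_pos.2 (hz u)) this
    exact eventually_nhdsWithin_iff.1 this
  have hL : ∀ᶠ v in 𝓝 u, v < u → 0 < zm u * z v := by
    rcases eq_or_ne u 0 with rfl | hu
    · exact Filter.Eventually.of_forall fun v hv => absurd hv not_lt_zero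
    have hu := pos_iff_ne_zero.2 hu
    have := (hl u hu).const_mul (zm u)
    have := Filter.Tendsto.eventually_const_lt (mul_self_pos.2 (hzm u hu)) this
    exact eventually_nhdsWithin_iff.1 this
  obtain ⟨ε, hε, hball⟩ := Metric.eventually_nhds_iff_ball.1 (hR.and hL)
  refine ⟨ε, hε, fun a ha b hb hab => ?_⟩
  have hoc : Set.Icc a b ⊆ Metric.ball u ε := fun x hx => by
    rw [Metric.mem_ball, NNReal.dist_eq, abs_lt] at *
    have h1 : (a : ℝ) ≤ x := hx.1
    have h2 : (x : ℝ) ≤ b := hx.2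
    constructor <;> linarith
  have hright : ∀ x ∈ Set.Ioc a b, u < x → 0 < z x / zm x := fun x hx hux => by
    refine div_pos_of_common_sign (c := z u) ?_ ((hball x (hoc ⟨hx.1.le, hx.2⟩)).1 hux.le)
    refine mul_leftLim_pos (w := max u a) (max_lt hux hx.1) (hl x (pos_of_gt hux))
      (hzm x (pos_of_gt hux)) fun y hy => ?_
    exact (hball y (hoc ⟨((le_max_right _ _).trans_lt hy.1).le, hy.2.le.trans hx.2⟩)).1
      ((le_max_left _ _).trans_lt hy.1).le
  have hleft : ∀ x ∈ Set.Ioc a b, x < u → 0 < z x / zm x := fun x hx hxu => by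
    refine div_pos_of_common_sign (c := zm u) ?_ ((hball x (hoc ⟨hx.1.le, hx.2⟩)).2 hxu)
    refine mul_leftLim_pos (w := a) hx.1 (hl x (pos_of_gt hx.1))
      (hzm x (pos_of_gt hx.1)) fun y hy => ?_
    exact (hball y (hoc ⟨hy.1.le, hy.2.le.trans hx.2⟩)).2 (hy.2.trans hxu)
  have hsub : {s | s ∈ Set.Ioc a b ∧ z s / zm s < 0} ⊆ {u} := by
    rintro x ⟨hx, hneg⟩
    by_contra hxu
    rcases lt_or_gt_of_ne hxu with h | h
    · exact absurd hneg (hleft x hx h).not_gt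
    · exact absurd hneg (hright x hx h).not_gt
  refine ⟨(Set.finite_singleton u).subset hsub, ?_⟩
  by_cases hu : u ∈ Set.Ioc a b
  · have hza := (hball a ha).2 hu.1
    have hzb := (hball b hb).1 hu.2
    have hiff : z b / z a < 0 ↔ z u / zm u < 0 := by
      have hpos : 0 < (z b / z a) * (z u / zm u) := by
        have : (z b / z a) * (z u / zm u) = (z u * z b) / (zm u * z a) := by
          field_simp
        rw [this]; exact div_pos hzb hza
      constructor <;> intro h <;> nlinarith
    split_ifs with h
    · rw [Set.ncard_eq_one]
      exact ⟨u, hsub.antisymm (Set.singleton_subset_iff.2 ⟨hu, hiff.1 h⟩)⟩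
    · rw [Set.ncard_eq_zero ((Set.finite_singleton u).subset hsub), Set.eq_empty_iff_forall_notMem]
      intro x hx
      obtain rfl : x = u := hsub hx
      exact h (hiff.2 hx.2)
  · have hpos : 0 < z b / z a := by
      rcases lt_or_ge a u with h | h
      · have hbu : b < u := lt_of_not_ge fun h' => hu ⟨h, h'⟩
        exact div_pos_of_common_sign ((hball a ha).2 h) ((hball b hb).2 hbu)
      · exact div_pos_of_common_sign ((hball a ha).1 h) ((hball b hb).1 (h.trans hab))
    rw [if_neg hpos.not_gt, Set.ncard_eq_zero ((Set.finite_singleton u).subset hsub),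
      Set.eq_empty_iff_forall_notMem]
    intro x hx
    obtain rfl : x = u := hsub hx
    exact hu hx.1

lemma ncard_Ioc_inter_add {p : ℝ≥0 → Prop} {a b c : ℝ≥0} (hab : a ≤ b) (hbc : b ≤ c)
    (h1 : {s | s ∈ Set.Ioc a b ∧ p s}.Finite) (h2 : {s | s ∈ Set.Ioc b c ∧ p s}.Finite) :
    {s | s ∈ Set.Ioc a c ∧ p s}.Finite ∧ {s | s ∈ Set.Ioc a c ∧ p s}.ncard =
      {s | s ∈ Set.Ioc a b ∧ p s}.ncard + {s | s ∈ Set.Ioc b c ∧ p s}.ncard := by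
  have hU : {s | s ∈ Set.Ioc a c ∧ p s} =
      {s | s ∈ Set.Ioc a b ∧ p s} ∪ {s | s ∈ Set.Ioc b c ∧ p s} := by
    rw [← Set.Ioc_union_Ioc_eq_Ioc hab hbc]
    ext s
    simp only [Set.mem_union, Set.mem_ofPred_eq, or_and_right]
  rw [hU]
  refine ⟨h1.union h2, Set.ncard_union_eq ?_ h1 h2⟩
  rw [Set.disjoint_left]
  exact fun s hs hs' => absurd hs.1.2 hs'.1.1.not_ge

/-- Along a fine enough regular grid, the sign changes of a càdlàg path bounded away from zero
are counted exactly by the sign changes between consecutive grid points. -/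
lemma eventually_ncard_signChange_eq_sum {z zm : ℝ≥0 → ℝ}
    (hr : ∀ t, ContinuousWithinAt z (Set.Ici t) t)
    (hl : ∀ t, 0 < t → Filter.Tendsto z (𝓝[<] t) (𝓝 (zm t)))
    (hz : ∀ t, z t ≠ 0) (hzm : ∀ t, 0 < t → zm t ≠ 0) (s t : ℝ≥0) :
    {x | x ∈ Set.Ioc s (s + t) ∧ z x / zm x < 0}.Finite ∧
    0 < (-1 : ℝ) ^ {x | x ∈ Set.Ioc s (s + t) ∧ z x / zm x < 0}.ncard * (z (s + t) / z s) ∧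
    ∀ᶠ n : ℕ in Filter.atTop, {x | x ∈ Set.Ioc s (s + t) ∧ z x / zm x < 0}.ncard =
      ∑ k ∈ Finset.range (n + 1), if z (s + (k + 1 : ℕ) * (t / (n + 1 : ℕ))) /
        z (s + k * (t / (n + 1 : ℕ))) < 0 then 1 else 0 := by
  choose ε hε hloc using exists_ball_ncard_signChange hr hl hz hzm
  obtain ⟨δ, hδ, hleb⟩ := lebesgue_number_lemma_of_metric (s := Set.Icc s (s + t))
    (c := fun u => Metric.ball u (ε u)) isCompact_Icc (fun u => Metric.isOpen_ball)
    (fun x _ => Set.mem_iUnion.2 ⟨x, Metric.mem_ball_self (hε x)⟩)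
  have hlim : Filter.Tendsto (fun n : ℕ => (t : ℝ) / (n + 1 : ℕ)) Filter.atTop (𝓝 0) :=
    (tendsto_const_div_atTop_nhds_zero_nat (t : ℝ)).comp (Filter.tendsto_add_atTop_nat 1)
  have key : ∀ᶠ n : ℕ in Filter.atTop,
      {x | x ∈ Set.Ioc s (s + t) ∧ z x / zm x < 0}.Finite ∧
      0 < (-1 : ℝ) ^ {x | x ∈ Set.Ioc s (s + t) ∧ z x / zm x < 0}.ncard * (z (s + t) / z s) ∧
      {x | x ∈ Set.Ioc s (s + t) ∧ z x / zm x < 0}.ncard =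
      ∑ k ∈ Finset.range (n + 1), if z (s + (k + 1 : ℕ) * (t / (n + 1 : ℕ))) /
        z (s + k * (t / (n + 1 : ℕ))) < 0 then 1 else 0 := by
    filter_upwards [hlim.eventually_lt_const hδ] with n hn
    set h : ℝ≥0 := t / (n + 1 : ℕ) with hh
    have hht : ((n + 1 : ℕ) : ℝ≥0) * h = t := mul_div_cancel₀ _ (by positivity)
    have hgrid : ∀ m ≤ n + 1,
        {x | x ∈ Set.Ioc s (s + m * h) ∧ z x / zm x < 0}.Finite ∧
        0 < (-1 : ℝ) ^ {x | x ∈ Set.Ioc s (s + m * h) ∧ z x / zm x < 0}.ncard *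
          (z (s + m * h) / z s) ∧
        {x | x ∈ Set.Ioc s (s + m * h) ∧ z x / zm x < 0}.ncard =
        ∑ k ∈ Finset.range m, if z (s + (k + 1 : ℕ) * h) / z (s + k * h) < 0
          then 1 else 0 := by
      intro m
      induction m with
      | zero => intro _; simp [div_self (hz s)]
      | succ m ih =>
        intro hm
        obtain ⟨hfin, hsign, hcard⟩ := ih (by omega)
        have hle : s + (m : ℝ≥0) * h ≤ s + (m + 1 : ℕ) * h := by
          gcongr; simp
        have hmt : s + (m : ℝ≥0) * h ∈ Set.Icc s (s + t) := by
          refine ⟨le_self_add, ?_⟩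
          rw [← hht]; gcongr; omega
        obtain ⟨u, hu⟩ := hleb _ hmt
        have hb : s + (m + 1 : ℕ) * h ∈ Metric.ball (s + (m : ℝ≥0) * h) δ := by
          rw [Metric.mem_ball, NNReal.dist_eq]
          have : ((s + (m + 1 : ℕ) * h : ℝ≥0) : ℝ) - ((s + (m : ℝ≥0) * h : ℝ≥0) : ℝ) = h := by
            push_cast; ring
          rw [this, abs_of_nonneg h.coe_nonneg]
          simpa [hh] using hn
        obtain ⟨hfin', hcard'⟩ := hloc u _ (hu (Metric.mem_ball_self hδ)) _ (hu hb) hle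
        obtain ⟨hfin'', hcard''⟩ := ncard_Ioc_inter_add le_self_add hle hfin hfin'
        refine ⟨hfin'', ?_, by rw [hcard'', Finset.sum_range_succ, hcard, hcard']⟩
        have hstep : 0 < (-1 : ℝ) ^ {x | x ∈ Set.Ioc (s + (m : ℝ≥0) * h) (s + (m + 1 : ℕ) * h) ∧
            z x / zm x < 0}.ncard * (z (s + (m + 1 : ℕ) * h) / z (s + m * h)) := by
          rw [hcard']
          split_ifs with h'
          · simpa using h'
          · simpa using lt_of_le_of_ne (not_lt.1 h') (div_ne_zero (hz _) (hz _)).symm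
        rw [hcard'', pow_add]
        have e : z (s + (m + 1 : ℕ) * h) / z s =
            z (s + m * h) / z s * (z (s + (m + 1 : ℕ) * h) / z (s + m * h)) := by
          rw [mul_comm (z (s + m * h) / z s), div_mul_div_cancel₀ (hz _)]
        rw [e, mul_mul_mul_comm]
        exact mul_pos hsign hstep
    simpa only [hht] using hgrid (n + 1) le_rfl
  obtain ⟨n, hn⟩ := key.exists
  exact ⟨hn.1, hn.2.1, key.mono fun n hn => hn.2.2⟩

lemma map_prodMk_eq_compProd {Ω β γ S : Type*} {m m0 : MeasurableSpace Ω} [MeasurableSpace β]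
    [MeasurableSpace γ] [MeasurableSpace S] (hm : m ≤ m0) {μ : Measure[m0] Ω} [IsFiniteMeasure μ]
    {V : Ω → β} {X : Ω → γ} {j : β → S} (hV : Measurable[m] V) (hX : Measurable[m0] X)
    (hj : Measurable j) {η : Kernel S γ} [IsMarkovKernel η]
    (h : ∀ A, MeasurableSet[m] A →
      (μ.restrict A).map X = η ∘ₘ (μ.restrict A).map (fun ω => j (V ω))) :
    μ.map (fun ω => (V ω, X ω)) = μ.map V ⊗ₘ η.comap j hj := by
  have hV0 : Measurable[m0] V := hV.mono hm le_rfl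
  refine Measure.ext_prod fun {A B} hA hB => ?_
  have := congrArg (fun ν => ν B) (h _ (hV hA))
  rw [Measure.map_apply hX hB, Measure.bind_apply hB η.aemeasurable,
    lintegral_map (η.measurable_coe hB) (show Measurable fun ω => j (V ω) from hj.comp hV0),
    Measure.restrict_apply (hX hB)] at this
  rw [Measure.map_apply (hV0.prodMk hX) (hA.prod hB), Measure.compProd_apply_prod hA hB,
    Measure.restrict_map hV0 hA, lintegral_map ((η.comap j hj).measurable_coe hB) hV0]
  simp only [Kernel.comap_apply]
  rw [← this, Set.inter_comm]
  rfl

/-- Under every `P j`, the regular conditional law of `(W, J t)` given `F s` is `κ (J s)`. -/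
def HasCondLaw {Ω S E : Type*} [MeasurableSpace Ω] [MeasurableSpace S] [MeasurableSpace E]
    (P : S → Measure Ω) (F : ℝ≥0 → MeasurableSpace Ω) (J : ℝ≥0 → Ω → S) (s t : ℝ≥0) (W : Ω → E)
    (κ : Kernel S (E × S)) : Prop :=
  ∀ j A, MeasurableSet[F s] A →
    ((P j).restrict A).map (fun ω => (W ω, J t ω)) = κ ∘ₘ ((P j).restrict A).map (J s)

/-- The kernel governing the sum of two successive increments with conditional laws `κ`, `η`. -/
noncomputable def addKernel {S E : Type*} [MeasurableSpace S] [MeasurableSpace E] [Add E]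
    (κ η : Kernel S (E × S)) : Kernel S (E × S) :=
  ((Kernel.id ×ₖ η.comap Prod.snd measurable_snd).map
    (fun p : (E × S) × (E × S) => (p.1.1 + p.2.1, p.2.2))) ∘ₖ κ

instance {S E : Type*} [MeasurableSpace S] [MeasurableSpace E] [Add E] [MeasurableAdd₂ E]
    (κ η : Kernel S (E × S)) [IsMarkovKernel κ] [IsMarkovKernel η] :
    IsMarkovKernel (addKernel κ η) := by
  have hg : Measurable (fun p : (E × S) × (E × S) => (p.1.1 + p.2.1, p.2.2)) := by fun_prop
  have := Kernel.IsMarkovKernel.map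
    (Kernel.id ×ₖ η.comap (Prod.snd : E × S → S) measurable_snd) hg
  unfold addKernel
  infer_instance

lemma HasCondLaw.add {Ω S E : Type*} [MeasurableSpace Ω] [MeasurableSpace S] [MeasurableSpace E]
    [Add E] [MeasurableAdd₂ E] {P : S → Measure Ω} [∀ j, IsFiniteMeasure (P j)]
    {F : ℝ≥0 → MeasurableSpace Ω}
    (hF_le : ∀ t, F t ≤ (inferInstance : MeasurableSpace Ω)) (hF_mono : Monotone F)
    {J : ℝ≥0 → Ω → S} (hJ : ∀ t, Measurable[F t] (J t)) {s u t : ℝ≥0} (hsu : s ≤ u)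
    {V W : Ω → E} (hV : Measurable[F u] V) (hW : Measurable W)
    {κ η : Kernel S (E × S)} [IsMarkovKernel η]
    (h1 : HasCondLaw P F J s u V κ) (h2 : HasCondLaw P F J u t W η) :
    HasCondLaw P F J s t (fun ω => V ω + W ω) (addKernel κ η) := by
  intro j A hA
  have hJ0 : ∀ t, Measurable (J t) := fun t => (hJ t).mono (hF_le t) le_rfl
  have hV0 : Measurable V := hV.mono (hF_le u) le_rfl
  have hg : Measurable (fun p : (E × S) × (E × S) => (p.1.1 + p.2.1, p.2.2)) := by fun_prop
  have key := map_prodMk_eq_compProd (μ := (P j).restrict A) (hF_le u)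
    (V := fun ω => (V ω, J u ω)) (X := fun ω => (W ω, J t ω)) (j := Prod.snd)
    (Measurable.prodMk (m := F u) hV (hJ u)) (hW.prodMk (hJ0 t)) measurable_snd
    (η := η) (fun B hB => by
      rw [Measure.restrict_restrict (hF_le u _ hB)]
      exact h2 j _ (@MeasurableSet.inter _ (F u) _ _ hB (hF_mono hsu _ hA)))
  have := congrArg (Measure.map (fun p : (E × S) × (E × S) => (p.1.1 + p.2.1, p.2.2))) key
  rw [Measure.map_map hg (by fun_prop), Measure.compProd_eq_comp_prod, Measure.map_comp _ _ hg,
    h1 j A hA, Measure.comp_assoc] at this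
  exact this

/-- The multiplicative increment `x` recorded additively: the increment of `-log |·|` and the
indicator of a sign change. -/
noncomputable def logSign (x : ℝ) : ℝ × ℝ := (-Real.log |x|, if x < 0 then 1 else 0)

lemma measurable_logSign : Measurable logSign := by
  unfold logSign
  refine Measurable.prodMk (by fun_prop) ?_
  exact Measurable.ite measurableSet_Iio measurable_const measurable_const

lemma abs_indicator_one_le {α : Type*} (D : Set α) (x : α) :
    |D.indicator (fun _ => (1 : ℝ)) x| ≤ 1 := by
  by_cases hx : x ∈ D <;> simp [hx]

lemma HasCondLaw.of_condExp {Ω S : Type*} [MeasurableSpace Ω] [MeasurableSpace S]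
    [MeasurableSingletonClass S] [Countable S]
    {P : S → Measure Ω} [∀ j, IsProbabilityMeasure (P j)] {F : ℝ≥0 → MeasurableSpace Ω}
    (hF_le : ∀ t, F t ≤ (inferInstance : MeasurableSpace Ω))
    {J : ℝ≥0 → Ω → S} (hJ : ∀ t, Measurable (J t)) {s t u : ℝ≥0} {X Y : Ω → ℝ}
    (hX : Measurable X) (hY : Measurable Y)
    (h : ∀ (j : S) (f : ℝ → ℝ) (g : S → ℝ),
      Measurable f → (∃ C, ∀ x, |f x| ≤ C) → Measurable g → (∃ C, ∀ x, |g x| ≤ C) →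
      (P j)[(fun ω => f (X ω) * g (J u ω)) | F s]
        =ᵐ[P j] fun ω => ∫ ω', f (Y ω') * g (J t ω') ∂(P (J s ω)))
    {κ : Kernel S (ℝ × S)} (hκ : ∀ k, κ k = (P k).map (fun ω => (Y ω, J t ω))) :
    HasCondLaw P F J s u X κ := by
  intro j A hA
  refine Measure.ext_prod fun {B C} hB hC => ?_
  have hXJ : Measurable (fun ω => (X ω, J u ω)) := hX.prodMk (hJ u)
  have hYJ : Measurable (fun ω => (Y ω, J t ω)) := hY.prodMk (hJ t)
  have hind : ∀ (U : Ω → ℝ) (r : ℝ≥0), (fun ω => B.indicator (fun _ => (1 : ℝ)) (U ω) *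
      C.indicator (fun _ => (1 : ℝ)) (J r ω)) =
      ((fun ω => (U ω, J r ω)) ⁻¹' (B ×ˢ C)).indicator (fun _ => 1) := by
    intro U r
    ext ω
    by_cases h1 : U ω ∈ B <;> by_cases h2 : J r ω ∈ C <;> simp [h1, h2]
  have hfg := h j (B.indicator fun _ => 1) (C.indicator fun _ => 1)
    (measurable_const.indicator hB) ⟨1, abs_indicator_one_le B⟩
    (measurable_const.indicator hC) ⟨1, abs_indicator_one_le C⟩
  simp only [hind] at hfg
  have hmX := hXJ (hB.prod hC)
  have hmY := hYJ (hB.prod hC)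
  simp only [integral_indicator_const _ hmY, smul_eq_mul, mul_one] at hfg
  have hint := setIntegral_condExp (hF_le s) (μ := P j)
    ((integrable_const (1 : ℝ)).indicator hmX) hA
  rw [setIntegral_congr_ae (hF_le s _ hA) (hfg.mono fun ω h _ => h)] at hint
  rw [integral_indicator_const _ hmX] at hint
  rw [Measure.map_apply hXJ (hB.prod hC), Measure.bind_apply (hB.prod hC) κ.aemeasurable,
    lintegral_map (κ.measurable_coe (hB.prod hC)) (hJ s)]
  have hκ' : ∀ ω, κ (J s ω) (B ×ˢ C) =
      ENNReal.ofReal ((P (J s ω)).real ((fun ω => (Y ω, J t ω)) ⁻¹' (B ×ˢ C))) := by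
    intro ω
    rw [hκ, Measure.map_apply hYJ (hB.prod hC), ofReal_measureReal]
  simp only [hκ']
  have hmeas : Measurable
      (fun ω => (P (J s ω)).real ((fun ω => (Y ω, J t ω)) ⁻¹' (B ×ˢ C))) :=
    (measurable_of_countable
      (fun k => (P k).real ((fun ω => (Y ω, J t ω)) ⁻¹' (B ×ˢ C)))).comp (hJ s)
  rw [← ofReal_integral_eq_lintegral_ofReal, hint, smul_eq_mul, mul_one, ofReal_measureReal]
  · exact Integrable.of_bound hmeas.aestronglyMeasurable 1 (Filter.Eventually.of_forall fun ω => by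
      rw [Real.norm_of_nonneg measureReal_nonneg]; exact measureReal_le_one)
  · exact Filter.Eventually.of_forall fun ω => measureReal_nonneg

lemma HasCondLaw.map {Ω S E E' : Type*} [MeasurableSpace Ω] [MeasurableSpace S]
    [MeasurableSpace E] [MeasurableSpace E'] {P : S → Measure Ω} {F : ℝ≥0 → MeasurableSpace Ω}
    {J : ℝ≥0 → Ω → S} {s t : ℝ≥0} {W : Ω → E} {κ : Kernel S (E × S)}
    (h : HasCondLaw P F J s t W κ) (hW : Measurable W) (hJ : Measurable (J t))
    {φ : E → E'} (hφ : Measurable φ) :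
    HasCondLaw P F J s t (fun ω => φ (W ω)) (κ.map (Prod.map φ id)) := by
  intro j A hA
  rw [← Measure.map_comp _ _ (hφ.prodMap measurable_id), ← h j A hA,
    Measure.map_map (hφ.prodMap measurable_id) (hW.prodMk hJ)]
  rfl

lemma HasCondLaw.zero {Ω S E : Type*} [MeasurableSpace Ω] [MeasurableSpace S]
    [MeasurableSpace E] [Zero E] (P : S → Measure Ω) (F : ℝ≥0 → MeasurableSpace Ω)
    {J : ℝ≥0 → Ω → S} {s : ℝ≥0} (hJ : Measurable (J s)) :
    HasCondLaw P F J s s (fun _ => (0 : E))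
      (Kernel.deterministic (fun k => ((0 : E), k)) (by fun_prop)) := by
  intro j A _
  rw [Measure.deterministic_comp_eq_map, Measure.map_map (by fun_prop) hJ]
  rfl

/-- The conditional law is identified by its unconditional version started at time `0`. -/
lemma HasCondLaw.kernel_eq {Ω S E : Type*} [MeasurableSpace Ω] [MeasurableSpace S]
    [MeasurableSpace E] {P : S → Measure Ω} [∀ j, IsProbabilityMeasure (P j)]
    {F : ℝ≥0 → MeasurableSpace Ω} {J : ℝ≥0 → Ω → S} {t : ℝ≥0} {W : Ω → E} {κ : Kernel S (E × S)}
    (h : HasCondLaw P F J 0 t W κ) (hP0 : ∀ j, ∀ᵐ ω ∂(P j), J 0 ω = j) (k : S) :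
    κ k = (P k).map (fun ω => (W ω, J t ω)) := by
  have := h k Set.univ (@MeasurableSet.univ _ (F 0))
  rw [Measure.restrict_univ, Measure.map_congr (hP0 k), Measure.map_const, measure_univ, one_smul,
    Measure.dirac_bind κ.measurable] at this
  exact this.symm

lemma HasCondLaw.setIntegral_eq {Ω S E : Type*} [MeasurableSpace Ω] [MeasurableSpace S]
    [MeasurableSpace E] {P : S → Measure Ω} [∀ j, IsProbabilityMeasure (P j)]
    {F : ℝ≥0 → MeasurableSpace Ω} {J : ℝ≥0 → Ω → S} {s t : ℝ≥0} {W : Ω → E}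
    {κ : Kernel S (E × S)} [IsMarkovKernel κ]
    (h : HasCondLaw P F J s t W κ) (hW : Measurable W) (hJs : Measurable (J s))
    (hJt : Measurable (J t)) {G : E × S → ℝ} (hG : Measurable G) {C : ℝ} (hC : ∀ x, |G x| ≤ C)
    (j : S) {A : Set Ω} (hA : MeasurableSet[F s] A) :
    ∫ ω in A, G (W ω, J t ω) ∂(P j) = ∫ ω in A, ∫ y, G y ∂(κ (J s ω)) ∂(P j) := by
  rw [← integral_map (φ := fun ω => (W ω, J t ω)) (hW.prodMk hJt).aemeasurable
    hG.aestronglyMeasurable, h j A hA]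
  have hint : ∀ (ν : Measure (E × S)) [IsFiniteMeasure ν], Integrable G ν := fun ν _ =>
    Integrable.of_bound hG.aestronglyMeasurable C (Filter.Eventually.of_forall hC)
  have := Measure.isFiniteMeasure_map ((P j).restrict A) (J s)
  rw [← Measure.snd_compProd, Measure.snd, integral_map measurable_snd.aemeasurable
    hG.aestronglyMeasurable, Measure.integral_compProd, integral_map hJs.aemeasurable]
  · exact (hG.stronglyMeasurable.integral_kernel).aestronglyMeasurable
  · exact (hint _).comp_measurable measurable_snd

/-- The accumulated `logSign` of the increments of `z` along `m` grid steps of size `h`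
from time `s`. -/
noncomputable def gridSum (z : ℝ≥0 → ℝ) (s h : ℝ≥0) (m : ℕ) : ℝ × ℝ :=
  ∑ k ∈ Finset.range m, logSign (z (s + (k + 1 : ℕ) * h) / z (s + k * h))

lemma gridSum_fst {z : ℝ≥0 → ℝ} (hz : ∀ t, z t ≠ 0) (s h : ℝ≥0) (m : ℕ) :
    (gridSum z s h m).1 = -Real.log |z (s + m * h)| - -Real.log |z s| := by
  have := Finset.sum_range_sub (fun k : ℕ => -Real.log |z (s + k * h)|) m
  simp only [Nat.cast_zero, zero_mul, add_zero] at this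
  rw [gridSum, Prod.fst_sum, ← this]
  refine Finset.sum_congr rfl fun k _ => ?_
  rw [logSign, abs_div, Real.log_div (abs_ne_zero.2 (hz _)) (abs_ne_zero.2 (hz _))]
  ring

lemma eventually_gridSum_eq {z zm : ℝ≥0 → ℝ}
    (hr : ∀ t, ContinuousWithinAt z (Set.Ici t) t)
    (hl : ∀ t, 0 < t → Filter.Tendsto z (𝓝[<] t) (𝓝 (zm t)))
    (hz : ∀ t, z t ≠ 0) (hzm : ∀ t, 0 < t → zm t ≠ 0) (s t : ℝ≥0) :
    ∀ᶠ n : ℕ in Filter.atTop, gridSum z s (t / (n + 1 : ℕ)) (n + 1) =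
      (-Real.log |z (s + t)| - -Real.log |z s|,
        (({x | x ∈ Set.Ioc s (s + t) ∧ z x / zm x < 0}.ncard : ℕ) : ℝ)) := by
  filter_upwards [(eventually_ncard_signChange_eq_sum hr hl hz hzm s t).2.2] with n hn
  have ht : ((n + 1 : ℕ) : ℝ≥0) * (t / (n + 1 : ℕ)) = t := mul_div_cancel₀ _ (by positivity)
  refine Prod.ext ?_ ?_
  · rw [gridSum_fst hz, ht]
  · simp only [hn, gridSum, Prod.snd_sum, logSign, Nat.cast_sum, Nat.cast_ite, Nat.cast_one,
      Nat.cast_zero]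

lemma measurable_gridSum {Ω : Type*} {m0 : MeasurableSpace Ω} {Z : ℝ≥0 → Ω → ℝ}
    {s h : ℝ≥0} {m : ℕ} (hZ : ∀ u ≤ s + m * h, Measurable (Z u)) :
    Measurable fun ω => gridSum (fun u => Z u ω) s h m := by
  unfold gridSum
  refine Finset.measurable_fun_sum _ fun k hk => measurable_logSign.comp ?_
  have hk := Finset.mem_range.1 hk
  refine (hZ _ ?_).div (hZ _ ?_)
  · gcongr
    omega
  · gcongr

lemma exists_hasCondLaw_gridSum {Ω S : Type*} [MeasurableSpace Ω] [MeasurableSpace S]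
    {P : S → Measure Ω} [∀ j, IsProbabilityMeasure (P j)] {F : ℝ≥0 → MeasurableSpace Ω}
    (hF_le : ∀ t, F t ≤ (inferInstance : MeasurableSpace Ω)) (hF_mono : Monotone F)
    {J : ℝ≥0 → Ω → S} {Z : ℝ≥0 → Ω → ℝ} (hJ : ∀ t, Measurable[F t] (J t))
    (hZ : ∀ t, Measurable[F t] (Z t)) {h : ℝ≥0} {η : Kernel S (ℝ × S)} [IsMarkovKernel η]
    (hη : ∀ s, HasCondLaw P F J s (s + h) (fun ω => Z (s + h) ω / Z s ω) η) (m : ℕ) :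
    ∃ κ : Kernel S ((ℝ × ℝ) × S), IsMarkovKernel κ ∧ ∀ s,
      HasCondLaw P F J s (s + m * h) (fun ω => gridSum (fun u => Z u ω) s h m) κ := by
  have hZ0 : ∀ t, Measurable (Z t) := fun t => (hZ t).mono (hF_le t) le_rfl
  have hJ0 : ∀ t, Measurable (J t) := fun t => (hJ t).mono (hF_le t) le_rfl
  induction m with
  | zero =>
    refine ⟨Kernel.deterministic (fun k => ((0 : ℝ × ℝ), k)) (by fun_prop), inferInstance,
      fun s => ?_⟩
    simpa [gridSum] using HasCondLaw.zero (E := ℝ × ℝ) P F (hJ0 s)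
  | succ m ih =>
    obtain ⟨κ, hκ, hlaw⟩ := ih
    have := Kernel.IsMarkovKernel.map η (measurable_logSign.prodMap (measurable_id (α := S)))
    refine ⟨addKernel κ (η.map (Prod.map logSign id)), inferInstance, fun s => ?_⟩
    have e : s + (m + 1 : ℕ) * h = s + m * h + h := by push_cast; ring
    have hW : Measurable fun ω => Z (s + m * h + h) ω / Z (s + m * h) ω :=
      (hZ0 _).div (hZ0 _)
    have := (hlaw s).add hF_le hF_mono hJ le_self_add
      (measurable_gridSum (m0 := F (s + m * h)) fun u hu => (hZ u).mono (hF_mono hu) le_rfl)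
      (measurable_logSign.comp hW) ((hη (s + m * h)).map hW (hJ0 _) measurable_logSign)
    simpa only [gridSum, Finset.sum_range_succ, e, Function.comp_apply] using this

/-- Additive representation of a Markov multiplicative process (converse direction of
Theorem 2.4): setting `Ȳ_t = -log |Z_t|` and `K̄_t = #{s ∈ (0,t] : Z_s/Z_{s-} < 0}`,
the pair `((Ȳ, K̄), J)` is a bivariate MAP, `Z_t = (-1)^{K̄_t} e^{-Ȳ_t}` a.s. for each `t`,
and `Z_0 = 1` a.s. -/
theorem map_from_mmp
    {Ω : Type*} [MeasurableSpace Ω]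
    {S : Type*} [MeasurableSpace S] [MeasurableSingletonClass S] [Countable S]
    (F : ℝ≥0 → MeasurableSpace Ω)
    (hF_le : ∀ t, F t ≤ (inferInstance : MeasurableSpace Ω))
    (hF_mono : Monotone F)
    (J : ℝ≥0 → Ω → S) (Z : ℝ≥0 → Ω → ℝ) (Zm : ℝ≥0 → Ω → ℝ)
    (hJ_adapted : ∀ t, Measurable[F t] (J t))
    (hZ_adapted : ∀ t, Measurable[F t] (Z t))
    -- càdlàg paths with left limits Zm
    (hZ_right : ∀ ω t, ContinuousWithinAt (fun u => Z u ω) (Set.Ici t) t)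
    (hZ_left : ∀ ω t, 0 < t →
      Filter.Tendsto (fun u => Z u ω) (nhdsWithin t (Set.Iio t)) (nhds (Zm t ω)))
    (hZ_ne : ∀ t ω, Z t ω ≠ 0)
    (hZm_ne : ∀ t ω, 0 < t → Zm t ω ≠ 0)
    (P : S → Measure Ω) [∀ j, IsProbabilityMeasure (P j)]
    (hP0 : ∀ j, P j {ω | J 0 ω = j} = 1)
    -- the MMP property of (Z, J)
    (hMMP : ∀ (j : S) (s t : ℝ≥0) (f : ℝ → ℝ) (g : S → ℝ),
      Measurable f → (∃ C, ∀ x, |f x| ≤ C) →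
      Measurable g → (∃ C, ∀ x, |g x| ≤ C) →
      (P j)[(fun ω => f (Z (s + t) ω / Z s ω) * g (J (s + t) ω)) | F s]
        =ᵐ[P j] fun ω => ∫ ω', f (Z t ω') * g (J t ω') ∂(P (J s ω))) :
    -- the number of sign changes up to any time is finite
    (∀ t ω, {s : ℝ≥0 | s ∈ Set.Ioc 0 t ∧ Z s ω / Zm s ω < 0}.Finite) ∧
    -- ((Ȳ, K̄), J) is a bivariate MAP, with Ȳ_t = -log|Z_t| and K̄ = signChangeCount
    (∀ (j : S) (s t : ℝ≥0) (f : ℝ × ℝ → ℝ) (g : S → ℝ),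
      Measurable f → (∃ C, ∀ x, |f x| ≤ C) →
      Measurable g → (∃ C, ∀ x, |g x| ≤ C) →
      (P j)[(fun ω => f ((-Real.log |Z (s + t) ω|) - (-Real.log |Z s ω|),
          (signChangeCount Z Zm (s + t) ω : ℝ) - (signChangeCount Z Zm s ω : ℝ))
            * g (J (s + t) ω)) | F s]
        =ᵐ[P j] fun ω =>
          ∫ ω', f (-Real.log |Z t ω'|, (signChangeCount Z Zm t ω' : ℝ))
            * g (J t ω') ∂(P (J s ω))) ∧
    -- Z_t = (-1)^{K̄_t} e^{-Ȳ_t} a.s.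
    (∀ (j : S) (t : ℝ≥0), ∀ᵐ ω ∂(P j),
      Z t ω = (-1 : ℝ) ^ (signChangeCount Z Zm t ω) * Real.exp (-(-Real.log |Z t ω|))) ∧
    -- Z_0 = 1 a.s.
    (∀ j : S, ∀ᵐ ω ∂(P j), Z 0 ω = 1) := by
  have hZ0 : ∀ t, Measurable (Z t) := fun t => (hZ_adapted t).mono (hF_le t) le_rfl
  have hJ0 : ∀ t, Measurable (J t) := fun t => (hJ_adapted t).mono (hF_le t) le_rfl
  have hP0' : ∀ j, ∀ᵐ ω ∂(P j), J 0 ω = j := fun j =>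
    (prob_compl_eq_zero_iff (hJ0 0 (measurableSet_singleton j))).2 (hP0 j)
  have hZ_one : ∀ j, ∀ᵐ ω ∂(P j), Z 0 ω = 1 := by
    intro j
    have h := hMMP j 0 0 (({1} : Set ℝ).indicator fun _ => 1) (fun _ => 1)
      (measurable_const.indicator (measurableSet_singleton 1))
      ⟨1, abs_indicator_one_le _⟩ measurable_const ⟨1, by simp⟩
    simp only [add_zero, div_self (hZ_ne 0 _), Set.indicator_of_mem (Set.mem_singleton (1 : ℝ)),
      mul_one, condExp_const (hF_le 0)] at h
    obtain ⟨ω, hω, hω'⟩ := (h.and (hP0' j)).exists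
    have hm : MeasurableSet (Z 0 ⁻¹' {1}) := hZ0 0 (measurableSet_singleton 1)
    have e : (fun ω' => ({1} : Set ℝ).indicator (fun _ => (1 : ℝ)) (Z 0 ω')) =
        (Z 0 ⁻¹' {1}).indicator fun _ => 1 := rfl
    simp only [hω', e] at hω
    rw [integral_indicator_const _ hm, smul_eq_mul, mul_one] at hω
    exact (prob_compl_eq_zero_iff (μ := P j) hm).2
      ((ofReal_measureReal (by finiteness)).symm.trans (by rw [← hω, ENNReal.ofReal_one]))
  have hpath := fun ω => eventually_ncard_signChange_eq_sum (hZ_right ω) (hZ_left ω)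
    (fun t => hZ_ne t ω) (fun t => hZm_ne t ω)
  have hfin : ∀ t ω, {s : ℝ≥0 | s ∈ Set.Ioc 0 t ∧ Z s ω / Zm s ω < 0}.Finite := fun t ω => by
    simpa using (hpath ω 0 t).1
  have hcount : ∀ s t ω, (({x | x ∈ Set.Ioc s (s + t) ∧ Z x ω / Zm x ω < 0}.ncard : ℕ) : ℝ) =
      (signChangeCount Z Zm (s + t) ω : ℝ) - (signChangeCount Z Zm s ω : ℝ) := by
    intro s t ω
    rw [signChangeCount, signChangeCount, (ncard_Ioc_inter_add zero_le le_self_add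
      (hfin s ω) (hpath ω s t).1).2]
    push_cast
    ring
  refine ⟨hfin, ?_, ?_, hZ_one⟩
  · rintro j s t f g hf ⟨C, hC⟩ hg ⟨D, hD⟩
    set G : (ℝ × ℝ) × S → ℝ := fun p => f p.1 * g p.2 with hG_def
    have hG : Measurable G := (hf.comp measurable_fst).mul (hg.comp measurable_snd)
    have hGC : ∀ p, |G p| ≤ C * D := fun p => by
      rw [hG_def, abs_mul]
      exact mul_le_mul (hC _) (hD _) (abs_nonneg _) ((abs_nonneg _).trans (hC p.1))
    let R : ℝ≥0 → ℕ → Ω → ℝ × ℝ := fun s n ω =>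
      gridSum (fun u => Z u ω) s (t / (n + 1 : ℕ)) (n + 1)
    have hR : ∀ s n, Measurable (R s n) := fun s n => measurable_gridSum fun u _ => hZ0 u
    let I : ℝ≥0 → Ω → ℝ × ℝ := fun s ω => (-Real.log |Z (s + t) ω| - -Real.log |Z s ω|,
      (signChangeCount Z Zm (s + t) ω : ℝ) - (signChangeCount Z Zm s ω : ℝ))
    have hRI : ∀ s ω, ∀ᶠ n in Filter.atTop, R s n ω = I s ω := fun s ω => by
      have := eventually_gridSum_eq (hZ_right ω) (hZ_left ω)
        (fun t => hZ_ne t ω) (fun t => hZm_ne t ω) s t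
      rw [hcount] at this
      exact this
    have hI : ∀ s, Measurable (I s) := fun s => by
      refine measurable_of_tendsto_metrizable (hR s) (tendsto_pi_nhds.2 fun ω => ?_)
      exact tendsto_const_nhds.congr' ((hRI s ω).mono fun n hn => hn.symm)
    have hGI : ∀ u (ν : Measure Ω) [IsFiniteMeasure ν], Filter.Tendsto
        (fun n => ∫ ω, G (R u n ω, J (u + t) ω) ∂ν) Filter.atTop
        (𝓝 (∫ ω, G (I u ω, J (u + t) ω) ∂ν)) := fun u ν _ => by
      refine tendsto_integral_of_dominated_convergence (fun _ => C * D)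
        (fun n => (hG.comp ((hR u n).prodMk (hJ0 _))).aestronglyMeasurable)
        (integrable_const _) (fun n => Filter.Eventually.of_forall fun ω => hGC _)
        (Filter.Eventually.of_forall fun ω => ?_)
      exact tendsto_const_nhds.congr' ((hRI u ω).mono fun n hn => by simp only [hn])
    have hbound : ∀ k (V : Ω → (ℝ × ℝ) × S), ‖∫ ω, G (V ω) ∂(P k)‖ ≤ C * D := fun k V => by
      simpa using norm_integral_le_of_norm_le_const (μ := P k) (f := fun ω => G (V ω))
        (Filter.Eventually.of_forall fun ω => hGC (V ω))
    have hgrid : ∀ n A, MeasurableSet[F s] A →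
        ∫ ω in A, G (R s n ω, J (s + t) ω) ∂(P j) =
          ∫ ω in A, ∫ ω', G (R 0 n ω', J (0 + t) ω') ∂(P (J s ω)) ∂(P j) := by
      intro n A hA
      set h : ℝ≥0 := t / (n + 1 : ℕ) with hh
      have ht : ((n + 1 : ℕ) : ℝ≥0) * h = t := mul_div_cancel₀ _ (by positivity)
      let η : Kernel S (ℝ × S) :=
        ⟨fun k => (P k).map (fun ω => (Z h ω, J h ω)), measurable_of_countable _⟩
      have : IsMarkovKernel η := ⟨fun k =>
        Measure.isProbabilityMeasure_map ((hZ0 h).prodMk (hJ0 h)).aemeasurable⟩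
      have hη : ∀ u, HasCondLaw P F J u (u + h) (fun ω => Z (u + h) ω / Z u ω) η := fun u =>
        HasCondLaw.of_condExp hF_le hJ0 ((hZ0 _).div (hZ0 _)) (hZ0 h)
          (fun j f g hf hfb hg hgb => hMMP j u h f g hf hfb hg hgb) fun k => rfl
      obtain ⟨κ, hκ, hlaw⟩ := exists_hasCondLaw_gridSum hF_le hF_mono hJ_adapted hZ_adapted hη
        (n + 1)
      rw [ht] at hlaw
      rw [(hlaw s).setIntegral_eq (hR s n) (hJ0 _) (hJ0 _) hG hGC j hA]
      refine integral_congr_ae (Filter.Eventually.of_forall fun ω => ?_)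
      simp only
      rw [(hlaw 0).kernel_eq hP0', integral_map ((hR 0 n).prodMk (hJ0 _)).aemeasurable
        hG.aestronglyMeasurable]
    have hlim : ∀ A, MeasurableSet[F s] A →
        ∫ ω in A, G (I s ω, J (s + t) ω) ∂(P j) =
          ∫ ω in A, ∫ ω', G (I 0 ω', J (0 + t) ω') ∂(P (J s ω)) ∂(P j) := by
      intro A hA
      refine tendsto_nhds_unique (hGI s ((P j).restrict A)) ?_
      simp only [hgrid _ A hA]
      refine tendsto_integral_of_dominated_convergence (fun _ => C * D) (fun n => ?_)
        (integrable_const _) (fun n => Filter.Eventually.of_forall fun ω => hbound _ _)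
        (Filter.Eventually.of_forall fun ω => hGI 0 (P (J s ω)))
      exact ((measurable_of_countable fun k =>
        ∫ ω', G (R 0 n ω', J (0 + t) ω') ∂(P k)).comp (hJ0 s)).aestronglyMeasurable
    have hzero : ∀ k, ∫ ω', G (I 0 ω', J (0 + t) ω') ∂(P k) =
        ∫ ω', f (-Real.log |Z t ω'|, (signChangeCount Z Zm t ω' : ℝ)) * g (J t ω') ∂(P k) := by
      intro k
      refine integral_congr_ae ((hZ_one k).mono fun ω hω => ?_)
      have h0 : signChangeCount Z Zm 0 ω = 0 := by simp [signChangeCount]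
      simp [G, I, hω, h0]
    simp only [hzero] at hlim
    have hmeas : ∀ m : MeasurableSpace Ω, Measurable[m] (J s) → Measurable[m] fun ω =>
        ∫ ω', f (-Real.log |Z t ω'|, (signChangeCount Z Zm t ω' : ℝ)) * g (J t ω')
          ∂(P (J s ω)) := fun m hm => (measurable_of_countable fun k =>
        ∫ ω', f (-Real.log |Z t ω'|, (signChangeCount Z Zm t ω' : ℝ)) * g (J t ω') ∂(P k)).comp hm
    symm
    refine ae_eq_condExp_of_forall_setIntegral_eq (hF_le s) ?_ (fun A _ _ => ?_)
      (fun A hA _ => (hlim A hA).symm) ?_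
    · exact Integrable.of_bound (hG.comp ((hI s).prodMk (hJ0 (s + t)))).aestronglyMeasurable
        (C * D) (Filter.Eventually.of_forall fun ω => hGC (I s ω, J (s + t) ω))
    · refine (Integrable.of_bound (hmeas _ (hJ0 s)).aestronglyMeasurable (C * D)
        (Filter.Eventually.of_forall fun ω => ?_)).integrableOn
      rw [← hzero]
      exact hbound _ _
    · exact (hmeas (F s) (hJ_adapted s)).stronglyMeasurable.aestronglyMeasurable
  · intro j t
    filter_upwards [hZ_one j] with ω hω
    have hsign := (hpath ω 0 t).2.1
    simp only [zero_add, hω, div_one] at hsign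
    rw [neg_neg, Real.exp_log (abs_pos.2 (hZ_ne t ω)), signChangeCount]
    rcases neg_one_pow_eq_or ℝ
      {s : ℝ≥0 | s ∈ Set.Ioc 0 t ∧ Z s ω / Zm s ω < 0}.ncard with h | h
    · rw [h, one_mul] at hsign
      rw [h, one_mul, abs_of_pos hsign]
    · rw [h] at hsign
      rw [h, abs_of_neg (by linarith)]
      ring
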